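/- Suppose the first syzygy of R_S is S-strongly flat. Given a short exact sequence 0 → A → B → C → 0 of R-modules, S-sfd(B) ≤ max{S-sfd(A), S-sfd(C)}. -/

import Mathlib

open CategoryTheory

universe u

variable (R : Type u) [CommRing R]

/-- `Ext^n_R(M, N) = 0`. -/
def extVanish (n : ℕ) (M N : Type u) [AddCommGroup M] [Module R M]
    [AddCommGroup N] [Module R N] : Prop :=
  Subsingleton (((Ext R (ModuleCat.{u} R) n).obj
    (Opposite.op (ModuleCat.of R M))).obj (ModuleCat.of R N))

/-- `C` is `S`-weakly cotorsion if `Ext^1_R(R_S, C) = 0`. -/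
def IsWeaklyCotorsion (S : Submonoid R) (C : Type u) [AddCommGroup C] [Module R C] : Prop :=
  extVanish R 1 (Localization S) C

/-- `F` is `S`-strongly flat if `Ext^1_R(F, C) = 0` for all `S`-weakly cotorsion `C`. -/
def IsStronglyFlat (S : Submonoid R) (F : Type u) [AddCommGroup F] [Module R F] : Prop :=
  ∀ (C : Type u) [AddCommGroup C] [Module R C], IsWeaklyCotorsion R S C → extVanish R 1 F C

/-- The `S`-strongly flat dimension of `M`: the smallest `n` with
`Ext^{n+1}_R(M, C) = 0` for every `S`-weakly cotorsion `C`, or `∞` otherwise. -/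
noncomputable def sfdim (S : Submonoid R) (M : Type u) [AddCommGroup M] [Module R M] : ℕ∞ :=
  sInf {n : ℕ∞ | ∃ m : ℕ, n = m ∧
    ∀ (C : Type u) [AddCommGroup C] [Module R C],
      IsWeaklyCotorsion R S C → extVanish R (m + 1) M C}

theorem extVanish_succ_iff (n : ℕ) (M N : Type u) [AddCommGroup M] [Module R M]
    [AddCommGroup N] [Module R N] : extVanish R (n + 1) M N ↔
      Subsingleton (Abelian.Ext.{u} (ModuleCat.of R M) (ModuleCat.of R N) (n + 1)) := by
  let Q := projectiveResolution (ModuleCat.of R M)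
  trans ∀ φ : Q.complex.X (n + 1) ⟶ ModuleCat.of R N, Q.complex.d (n + 2) (n + 1) ≫ φ = 0 →
      ∃ g : Q.complex.X n ⟶ ModuleCat.of R N, Q.complex.d (n + 1) n ≫ g = φ
  · unfold extVanish
    rw [← ModuleCat.isZero_iff_subsingleton,
      (Q.isoExt (R := R) (n + 1) (ModuleCat.of R N)).isZero_iff,
      ← HomologicalComplex.exactAt_iff_isZero_homology,
      HomologicalComplex.exactAt_iff' _ n (n + 1) (n + 2) (by simp) (by simp),
      ShortComplex.moduleCat_exact_iff]
    rfl
  · constructor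
    · intro h
      refine subsingleton_of_forall_eq 0 fun α => ?_
      obtain ⟨φ, hφ, rfl⟩ := Q.extMk_surjective α (n + 2) rfl
      rw [Q.extMk_eq_zero_iff φ (n + 2) rfl hφ n rfl]
      exact h φ hφ
    · intro h φ hφ
      rw [← Q.extMk_eq_zero_iff φ (n + 2) rfl hφ n rfl]
      exact Subsingleton.elim _ _

theorem ses_of_linear {A B C : Type u} [AddCommGroup A] [Module R A] [AddCommGroup B] [Module R B]
    [AddCommGroup C] [Module R C] (f : A →ₗ[R] B) (g : B →ₗ[R] C)
    (hf : Function.Injective f) (hg : Function.Surjective g) (hfg : Function.Exact f g) :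
    (ShortComplex.mk (ModuleCat.ofHom f) (ModuleCat.ofHom g)
      (by ext x; exact hfg.apply_apply_eq_zero x)).ShortExact where
  exact := by
    rw [ShortComplex.moduleCat_exact_iff]
    intro x hx
    exact (hfg x).1 hx
  mono_f := (ModuleCat.mono_iff_injective _).2 hf
  epi_g := (ModuleCat.epi_iff_surjective _).2 hg

open Abelian in
/-- Cosyzygy step. -/
theorem exists_cosyzygy (S : Submonoid R) (H P : Type u)
    [AddCommGroup H] [Module R H] [AddCommGroup P] [Module R P]
    (i : H →ₗ[R] P) (p : P →ₗ[R] Localization S)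
    (hi : Function.Injective i) (hp : Function.Surjective p) (hip : Function.Exact i p)
    (hP : Module.Projective R P) (hH : IsStronglyFlat R S H)
    (W : Type u) [AddCommGroup W] [Module R W] (hW : IsWeaklyCotorsion R S W) :
    ∃ D : ModuleCat.{u} R, IsWeaklyCotorsion R S D ∧
      ∀ (M : Type u) [AddCommGroup M] [Module R M] (n : ℕ),
        extVanish R (n + 1) M D → extVanish R (n + 2) M W := by
  let W' := ModuleCat.of R W
  let T : ShortComplex (ModuleCat.{u} R) :=
    ShortComplex.mk (Injective.ι W') (Limits.cokernel.π (Injective.ι W'))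
      (Limits.cokernel.condition _)
  have hT : T.ShortExact :=
    { exact := ShortComplex.exact_of_g_is_cokernel _ (Limits.cokernelIsCokernel _)
      mono_f := inferInstanceAs (Mono (Injective.ι W'))
      epi_g := inferInstanceAs (Epi (Limits.cokernel.π (Injective.ι W'))) }
  have : Injective T.X₂ := inferInstanceAs (Injective (Injective.under W'))
  have hV := ses_of_linear R i p hi hp hip
  have : Projective (ModuleCat.of R P) := (IsProjective.iff_projective P).1 hP
  refine ⟨T.X₃, ?_, ?_⟩
  · refine (extVanish_succ_iff R 0 _ _).2 (subsingleton_of_forall_eq 0 fun α => ?_)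
    have h2 : ∀ β : Ext.{u} (ModuleCat.of R (Localization S)) W' 2, β = 0 := by
      intro β
      obtain ⟨γ, rfl⟩ := Ext.contravariant_sequence_exact₃ hV W' β
        (Ext.eq_zero_of_projective (n := 1) (P := ModuleCat.of R P) _) (n₀ := 1) rfl
      have := (extVanish_succ_iff R 0 H W).1 (hH W hW)
      have h0 : γ = 0 := Subsingleton.elim (α := Ext.{u} (ModuleCat.of R H) W' 1) _ _
      rw [h0, Ext.comp_zero]
    obtain ⟨β, rfl⟩ := Ext.covariant_sequence_exact₃ (ModuleCat.of R (Localization S)) hT α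
      (n₁ := 2) rfl (h2 _)
    rw [Ext.eq_zero_of_injective (n := 0) β, Ext.zero_comp]
  · intro M _ _ n h
    refine (extVanish_succ_iff R (n + 1) _ _).2 (subsingleton_of_forall_eq 0 fun α => ?_)
    obtain ⟨β, rfl⟩ := Ext.covariant_sequence_exact₁ (ModuleCat.of R M) hT α
      (Ext.eq_zero_of_injective (n := n + 1) _) (n₀ := n + 1) rfl
    have := (extVanish_succ_iff R n M T.X₃).1 h
    have h0 : β = 0 := Subsingleton.elim (α := Ext.{u} (ModuleCat.of R M) T.X₃ (n + 1)) _ _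
    rw [h0, Ext.zero_comp]

open Abelian in
theorem extVanish_middle {A B C : Type u} [AddCommGroup A] [Module R A]
    [AddCommGroup B] [Module R B]
    [AddCommGroup C] [Module R C] (f : A →ₗ[R] B) (g : B →ₗ[R] C)
    (hf : Function.Injective f) (hg : Function.Surjective g) (hfg : Function.Exact f g)
    (W : Type u) [AddCommGroup W] [Module R W] (n : ℕ)
    (hA : extVanish R (n + 1) A W) (hC : extVanish R (n + 1) C W) :
    extVanish R (n + 1) B W := by
  rw [extVanish_succ_iff] at *
  have hV := ses_of_linear R f g hf hg hfg
  refine subsingleton_of_forall_eq 0 fun α => ?_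
  obtain ⟨β, rfl⟩ := Ext.contravariant_sequence_exact₂ hV _ α (hA.elim _ _)
  rw [hC.elim β 0, Ext.comp_zero]

theorem extVanish_mono (S : Submonoid R) (H P : Type u)
    [AddCommGroup H] [Module R H] [AddCommGroup P] [Module R P]
    (i : H →ₗ[R] P) (p : P →ₗ[R] Localization S)
    (hi : Function.Injective i) (hp : Function.Surjective p) (hip : Function.Exact i p)
    (hP : Module.Projective R P) (hH : IsStronglyFlat R S H)
    (M : Type u) [AddCommGroup M] [Module R M] (a b : ℕ) (hab : a ≤ b)
    (h : ∀ (C : Type u) [AddCommGroup C] [Module R C],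
      IsWeaklyCotorsion R S C → extVanish R (a + 1) M C) :
    ∀ (C : Type u) [AddCommGroup C] [Module R C],
      IsWeaklyCotorsion R S C → extVanish R (b + 1) M C := by
  induction b, hab using Nat.le_induction with
  | base => exact h
  | succ b _ ih =>
    intro W _ _ hW
    obtain ⟨D, hD, hD2⟩ := exists_cosyzygy R S H P i p hi hp hip hP hH W hW
    exact hD2 M b (ih D hD)

theorem exists_of_sfdim_ne_top (S : Submonoid R) (M : Type u) [AddCommGroup M] [Module R M]
    (h : sfdim R S M ≠ ⊤) : ∃ m : ℕ, sfdim R S M = m ∧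
    ∀ (C : Type u) [AddCommGroup C] [Module R C],
      IsWeaklyCotorsion R S C → extVanish R (m + 1) M C := by
  unfold sfdim at h ⊢
  refine csInf_mem (α := ℕ∞) (s := {n : ℕ∞ | ∃ m : ℕ, n = m ∧
    ∀ (C : Type u) [AddCommGroup C] [Module R C],
      IsWeaklyCotorsion R S C → extVanish R (m + 1) M C}) (Set.nonempty_iff_ne_empty.2 fun h0 => h ?_)
  rw [h0, sInf_empty]

/-- If the first syzygy of `R_S` is `S`-strongly flat, then for a short exact
sequence `0 → A → B → C → 0` one has `S-sfd(B) ≤ max{S-sfd(A), S-sfd(C)}`. -/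
theorem sfdim_middle_le_max (S : Submonoid R) (H P : Type u)
    [AddCommGroup H] [Module R H] [AddCommGroup P] [Module R P]
    (i : H →ₗ[R] P) (p : P →ₗ[R] Localization S)
    (hi : Function.Injective i) (hp : Function.Surjective p) (hip : Function.Exact i p)
    (hP : Module.Projective R P) (hH : IsStronglyFlat R S H)
    (A B C : Type u) [AddCommGroup A] [Module R A] [AddCommGroup B] [Module R B]
    [AddCommGroup C] [Module R C] (f : A →ₗ[R] B) (g : B →ₗ[R] C)
    (hf : Function.Injective f) (hg : Function.Surjective g) (hfg : Function.Exact f g) :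
    sfdim R S B ≤ max (sfdim R S A) (sfdim R S C) := by
  by_cases hA : sfdim R S A = ⊤
  · simp [hA]
  by_cases hC : sfdim R S C = ⊤
  · simp [hC]
  obtain ⟨a, ha, ha'⟩ := exists_of_sfdim_ne_top R S A hA
  obtain ⟨c, hc, hc'⟩ := exists_of_sfdim_ne_top R S C hC
  rw [ha, hc]
  have hm : max (a : ℕ∞) (c : ℕ∞) = ((max a c : ℕ) : ℕ∞) :=
    (Nat.mono_cast (α := ℕ∞)).map_max.symm
  rw [hm]
  refine sInf_le ⟨max a c, rfl, fun W _ _ hW => ?_⟩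
  exact extVanish_middle R f g hf hg hfg W _
    (extVanish_mono R S H P i p hi hp hip hP hH A a _ (le_max_left _ _) ha' W hW)
    (extVanish_mono R S H P i p hi hp hip hP hH C c _ (le_max_right _ _) hc' W hW)
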